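/- (a) If X is a submodule of Y, then E_S(X) ⊆ E_S(Y). (b) If X is a submodule of Y, then the image of E_S(Y) under the canonical quotient map Y → Y/X is equal to E_S(Y/X); equivalently, E_S(Y/X) is isomorphic to E_S(Y)/(X ∩ E_S(Y)). -/

import Mathlib

/-- `E_S(M)` is the intersection of the kernels of all `A`-module homomorphisms `M → S`;
thus `M / E_S(M)` is the `S`-isotypic part of the head of `M` (the functor `ℰ_i` of the
paper, for `S = S_i`). -/
def ES (A : Type*) [Ring A] (S M : Type*) [AddCommGroup S] [Module A S]
    [AddCommGroup M] [Module A M] : Submodule A M :=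
  ⨅ f : M →ₗ[A] S, LinearMap.ker f

/-!
Everything but one inclusion is functoriality: composing with homomorphisms to `S` shows that every
`f : M → N` maps `E_S(M)` into `E_S(N)`. For the remaining inclusion, `E_S(N) ⊆ f(E_S(M))` with `f`
onto, it is enough that `N / f(E_S(M))` is cogenerated by `S`. It is a quotient of `M / E_S(M)`,
which is cogenerated by `S`; when `M / E_S(M)` is semisimple its quotients are also submodules of
it, and being cogenerated by `S` passes to submodules. If `M` is Artinian and `rad S = 0`, then
`rad (M / E_S(M)) = 0`, and an Artinian module with zero radical is semisimple.
-/

section ES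

variable {A S M N : Type*} [Ring A] [AddCommGroup S] [Module A S]
  [AddCommGroup M] [Module A M] [AddCommGroup N] [Module A N]

lemma mem_ES {m : M} : m ∈ ES A S M ↔ ∀ f : M →ₗ[A] S, f m = 0 := by
  simp only [ES, Submodule.mem_iInf, LinearMap.mem_ker]

lemma map_ES_le (f : M →ₗ[A] N) : (ES A S M).map f ≤ ES A S N := by
  rintro _ ⟨m, hm, rfl⟩
  exact mem_ES.mpr fun g ↦ mem_ES.mp hm (g ∘ₗ f)

lemma ES_eq_bot_of_injective (f : M →ₗ[A] N) (hf : Function.Injective f) (hN : ES A S N = ⊥) :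
    ES A S M = ⊥ := by
  have hle : (ES A S M).map f ≤ (⊥ : Submodule A M).map f := by
    simpa only [hN, Submodule.map_bot] using map_ES_le (S := S) f
  exact le_bot_iff.mp ((Submodule.map_le_map_iff_of_injective hf _ _).mp hle)

lemma ES_eq_bot_of_surjective [IsSemisimpleModule A M] (f : M →ₗ[A] N)
    (hf : Function.Surjective f) (hM : ES A S M = ⊥) : ES A S N = ⊥ := by
  obtain ⟨s, hs⟩ := IsSemisimpleModule.lifting_property f hf LinearMap.id
  exact ES_eq_bot_of_injective s (Function.LeftInverse.injective (LinearMap.congr_fun hs)) hM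

lemma ES_le_of_ES_quotient_eq_bot {P : Submodule A M} (h : ES A S (M ⧸ P) = ⊥) :
    ES A S M ≤ P := by
  rw [← P.ker_mkQ, LinearMap.le_ker_iff_map, ← le_bot_iff, ← h]
  exact map_ES_le P.mkQ

variable (A S M) in
lemma ES_quotient_ES : ES A S (M ⧸ ES A S M) = ⊥ := by
  refine (Submodule.eq_bot_iff _).mpr fun q hq ↦ ?_
  obtain ⟨m, rfl⟩ := (ES A S M).mkQ_surjective q
  refine (Submodule.Quotient.mk_eq_zero _).mpr (mem_ES.mpr fun f ↦ ?_)
  exact mem_ES.mp hq ((ES A S M).liftQ f (iInf_le _ f))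

theorem map_ES_of_surjective [IsSemisimpleModule A (M ⧸ ES A S M)] (f : M →ₗ[A] N)
    (hf : Function.Surjective f) : (ES A S M).map f = ES A S N := by
  refine le_antisymm (map_ES_le f) (ES_le_of_ES_quotient_eq_bot ?_)
  let fbar : (M ⧸ ES A S M) →ₗ[A] N ⧸ (ES A S M).map f :=
    (ES A S M).mapQ _ f (Submodule.le_comap_map f _)
  have hfbar : Function.Surjective fbar := by
    rw [← LinearMap.range_eq_top, Submodule.range_mapQ, LinearMap.range_eq_top.mpr hf,
      Submodule.map_top, Submodule.range_mkQ]
  exact ES_eq_bot_of_surjective fbar hfbar (ES_quotient_ES A S M)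

lemma jacobson_le_ES (hS : Module.jacobson A S = ⊥) : Module.jacobson A M ≤ ES A S M :=
  le_iInf fun f ↦ by
    rw [LinearMap.le_ker_iff_map, ← le_bot_iff, ← hS]
    exact Module.map_jacobson_le f

lemma isSemisimpleModule_quotient_ES [IsArtinian A M] (hS : Module.jacobson A S = ⊥) :
    IsSemisimpleModule A (M ⧸ ES A S M) := by
  rw [IsArtinian.isSemisimpleModule_iff_jacobson, ← le_bot_iff, ← ES_quotient_ES A S M]
  exact jacobson_le_ES hS

end ES

theorem stmt11_general (A S Y : Type*) [Ring A] [AddCommGroup S] [Module A S]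
    (hS : Module.jacobson A S = ⊥) [AddCommGroup Y] [Module A Y] [IsArtinian A Y]
    (X : Submodule A Y) :
    Submodule.map X.subtype (ES A S ↥X) ≤ ES A S Y ∧
    Submodule.map X.mkQ (ES A S Y) = ES A S (Y ⧸ X) := by
  have : IsSemisimpleModule A (Y ⧸ ES A S Y) := isSemisimpleModule_quotient_ES hS
  exact ⟨map_ES_le X.subtype, map_ES_of_surjective X.mkQ X.mkQ_surjective⟩

/-- for a finite-dimensional algebra `A` over a field `k`, a simple
`A`-module `S`, and a submodule `X` of a finite-dimensional `A`-module `Y`: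
(a) `E_S(X) ⊆ E_S(Y)`;
(b) the image of `E_S(Y)` under the canonical quotient map `Y → Y/X` equals `E_S(Y/X)`. -/
theorem stmt11 (k A : Type*) [Field k] [Ring A] [Algebra k A] [FiniteDimensional k A]
    (S : Type*) [AddCommGroup S] [Module A S] [IsSimpleModule A S]
    [Module k S] [IsScalarTower k A S]
    (Y : Type*) [AddCommGroup Y] [Module A Y] [Module k Y] [IsScalarTower k A Y]
    [FiniteDimensional k Y]
    (X : Submodule A Y) :
    Submodule.map X.subtype (ES A S ↥X) ≤ ES A S Y ∧
    Submodule.map X.mkQ (ES A S Y) = ES A S (Y ⧸ X) := by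
  have : IsArtinian A Y := isArtinian_of_tower k inferInstance
  exact stmt11_general A S Y (IsSemisimpleModule.jacobson_eq_bot A S) X
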